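/- arXiv:2510.11753 — 13 statements merged into one kernel-verified Lean document; each statement's English description precedes it below -/
import Mathlib

section
/- The only solutions in positive integers (x, y) of the equation 5^x + 3 = 2^y are (x, y) = (1, 3) and (x, y) = (3, 7). -/
/-!
For `y ≤ 7` the exponent `x` is at most `3`, and the finitely many cases are inspected.

For `y ≥ 8` the equation gives `5 ^ x ≡ -3 (mod 256)`. As `5` has order `64` modulo `256`,
this forces `x ≡ 35 (mod 64)`. Modulo the prime `641` both `5` and `2` have order `64`, so
`5 ^ x + 3 ≡ 5 ^ 35 + 3 (mod 641)`, and this residue is not a power of `2` modulo `641`.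
-/

theorem pow_mod_of_period {a m k : ℕ} (h : a ^ k % m = 1 % m) (n : ℕ) :
    a ^ n % m = a ^ (n % k) % m := by
  have h1 : a ^ k ≡ 1 [MOD m] := h
  have h2 : (a ^ k) ^ (n / k) * a ^ (n % k) ≡ 1 ^ (n / k) * a ^ (n % k) [MOD m] :=
    (h1.pow _).mul_right _
  rw [← pow_mul, ← pow_add, Nat.div_add_mod, one_pow, one_mul] at h2
  exact h2

theorem no_solution_of_eight_le {x y : ℕ} (hy : 8 ≤ y) : 5 ^ x + 3 ≠ 2 ^ y := by
  intro h
  have hx : x % 64 = 35 := by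
    have hdvd : 2 ^ y % 256 = 0 := Nat.mod_eq_zero_of_dvd (pow_dvd_pow 2 hy)
    have h5 : 5 ^ x % 256 = 5 ^ (x % 64) % 256 := pow_mod_of_period (by norm_num) x
    have h0 : (5 ^ (x % 64) % 256 + 3) % 256 = 0 := by omega
    have key : ∀ r < 64, (5 ^ r % 256 + 3) % 256 = 0 → r = 35 := by decide
    exact key _ (Nat.mod_lt _ (by norm_num)) h0
  have h5 : 5 ^ x % 641 = 5 ^ (x % 64) % 641 := pow_mod_of_period (by norm_num) x
  have h2 : 2 ^ y % 641 = 2 ^ (y % 64) % 641 := pow_mod_of_period (by norm_num) y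
  rw [hx] at h5
  have h0 : 2 ^ (y % 64) % 641 = (5 ^ 35 % 641 + 3) % 641 := by omega
  have key : ∀ r < 64, 2 ^ r % 641 ≠ (5 ^ 35 % 641 + 3) % 641 := by decide
  exact key _ (Nat.mod_lt _ (by norm_num)) h0

theorem stmt_0 : ∀ x y : ℕ, 1 ≤ x → 1 ≤ y →
    (5 ^ x + 3 = 2 ^ y ↔ (x = 1 ∧ y = 3) ∨ (x = 3 ∧ y = 7)) := by
  intro x y hx hy
  constructor
  · intro h
    have hy8 : y < 8 := by
      by_contra hc
      exact no_solution_of_eight_le (not_lt.mp hc) h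
    have hx4 : x < 4 := by
      by_contra hc
      have h5 : 5 ^ 4 ≤ 5 ^ x := Nat.pow_le_pow_right (by norm_num) (not_lt.mp hc)
      have h2 : 2 ^ y ≤ 2 ^ 7 := Nat.pow_le_pow_right (by norm_num) (Nat.le_of_lt_succ hy8)
      omega
    interval_cases x <;> interval_cases y <;> simp_all
  · rintro (⟨rfl, rfl⟩ | ⟨rfl, rfl⟩) <;> norm_num
end

section
/- Assume the ABC conjecture: for every real ε > 0 there exists a constant K > 0 such that for all pairwise coprime positive integers A, B, C with A + B = C one has C < K · rad(A·B·C)^(1+ε), where rad(n) denotes the product of the distinct prime factors of n. Then for any positive integers a, b, c with a ≥ 2, c ≥ 2 and a, b, c pairwise coprime, the set of pairs of positive integers (x, y) satisfying a^x + b = c^y is finite. -/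
/-! The radical of `a ^ x * b * c ^ y` does not depend on the positive exponents `x`, `y`
(`rad_pow_mul`), so the ABC inequality for `a ^ x + b = c ^ y`, used with `ε = 1`, bounds `c ^ y`
by a constant depending only on `a`, `b`, `c`. Since `x < a ^ x < c ^ y` and `y < c ^ y`, this
bounds both exponents. -/

/-- The radical of a positive integer: the product of its distinct prime factors. -/
def rad (n : ℕ) : ℕ := ∏ p ∈ n.primeFactors, p

theorem rad_pow_mul (a b c x y : ℕ) (ha : a ≠ 0) (hb : b ≠ 0) (hc : c ≠ 0)
    (hx : x ≠ 0) (hy : y ≠ 0) : rad (a ^ x * b * c ^ y) = rad (a * b * c) := by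
  unfold rad
  have hax : a ^ x ≠ 0 := pow_ne_zero _ ha
  have hcy : c ^ y ≠ 0 := pow_ne_zero _ hc
  rw [Nat.primeFactors_mul (mul_ne_zero hax hb) hcy, Nat.primeFactors_mul hax hb,
    Nat.primeFactors_mul (mul_ne_zero ha hb) hc, Nat.primeFactors_mul ha hb,
    Nat.primeFactors_pow _ hx, Nat.primeFactors_pow _ hy]

theorem stmt_1
    (abc : ∀ ε : ℝ, 0 < ε → ∃ K : ℝ, 0 < K ∧
      ∀ A B C : ℕ, 0 < A → 0 < B → 0 < C →
        Nat.Coprime A B → Nat.Coprime B C → Nat.Coprime A C →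
        A + B = C → (C : ℝ) < K * (rad (A * B * C) : ℝ) ^ (1 + ε))
    (a b c : ℕ) (ha : 2 ≤ a) (hb : 1 ≤ b) (hc : 2 ≤ c)
    (hab : Nat.Coprime a b) (hbc : Nat.Coprime b c) (hac : Nat.Coprime a c) :
    {p : ℕ × ℕ | 1 ≤ p.1 ∧ 1 ≤ p.2 ∧ a ^ p.1 + b = c ^ p.2}.Finite := by
  obtain ⟨K, -, hK⟩ := abc 1 one_pos
  obtain ⟨N, hN⟩ := exists_nat_ge (K * (rad (a * b * c) : ℝ) ^ (1 + 1 : ℝ))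
  refine ((Set.finite_Iio N).prod (Set.finite_Iio N)).subset ?_
  rintro ⟨x, y⟩ ⟨hx, hy, h⟩
  dsimp only at hx hy h
  have key := hK (a ^ x) b (c ^ y) (by positivity) hb (by positivity)
    (hab.pow_left x) (hbc.pow_right y) (hac.pow x y) h
  rw [rad_pow_mul a b c x y (by omega) (by omega) (by omega) (by omega) (by omega)] at key
  have hlt : c ^ y < N := by exact_mod_cast key.trans_le hN
  have h1 : x < a ^ x := Nat.lt_pow_self ha
  have h2 : y < c ^ y := Nat.lt_pow_self hc
  exact ⟨show x < N by omega, show y < N by omega⟩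
end

section
/- The only solutions in positive integers (x, y) of the equation 2^x + 1 = 3^y are (x, y) = (1, 1) and (x, y) = (3, 2). -/
/-!
If `x ≥ 4`, reduction modulo 16 gives `3 ^ y ≡ 1`, and since 3 has order 4 modulo 16 this forces
`4 ∣ y`. Then `3 ^ y` is a power of `81 ≡ 1 [MOD 5]`, so `5 ∣ 3 ^ y - 1 = 2 ^ x`, which is absurd.
The cases `x ≤ 3` are immediate.
-/

theorem stmt_6 : ∀ x y : ℕ, 1 ≤ x → 1 ≤ y →
    (2 ^ x + 1 = 3 ^ y ↔ (x = 1 ∧ y = 1) ∨ (x = 3 ∧ y = 2)) := by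
  intro x y hx hy
  constructor
  · intro h
    rcases Nat.lt_or_ge x 4 with hx4 | hx4
    · have hy3 : y < 3 := by
        have h1 : 2 ^ x ≤ 2 ^ 3 := Nat.pow_le_pow_right (by norm_num) (by omega)
        have h2 : 3 ^ y < 3 ^ 3 := by omega
        exact (Nat.pow_lt_pow_iff_right (by norm_num)).1 h2
      interval_cases x <;> interval_cases y <;> simp_all
    · exfalso
      obtain ⟨m, rfl⟩ := Nat.exists_eq_add_of_le hx4
      have hdecomp : 3 ^ y = 81 ^ (y / 4) * 3 ^ (y % 4) := by
        conv_lhs => rw [← Nat.div_add_mod y 4, pow_add, pow_mul]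
        norm_num
      have h16 : 81 ^ (y / 4) % 16 = 1 := by simp [Nat.pow_mod]
      have h5 : 81 ^ (y / 4) % 5 = 1 := by simp [Nat.pow_mod]
      rw [hdecomp, pow_add] at h
      have hr : y % 4 < 4 := Nat.mod_lt _ (by norm_num)
      generalize y % 4 = r at h hr
      -- the residue of `3 ^ y` modulo 16 leaves only `r = 0`
      have hr0 : r = 0 := by
        interval_cases r <;> omega
      subst hr0
      have hdvd : 5 ∣ 2 ^ (4 + m) := by
        rw [pow_add]; omega
      have := Nat.Prime.dvd_of_dvd_pow (by norm_num) hdvd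
      omega
  · rintro (⟨rfl, rfl⟩ | ⟨rfl, rfl⟩) <;> norm_num
end

section
/- The only solutions in positive integers (x, y) of the equation 2^x + 4 = 6^y are (x, y) = (1, 1) and (x, y) = (5, 2). -/
/-! For `y ≥ 3` the right side is at least `216` and divisible by `8`; the size forces `x ≥ 3`,
so the left side is `4` modulo `8`, a contradiction. For `y = 1, 2` the equation reads
`2 ^ x = 2`, `2 ^ x = 2 ^ 5`. -/

theorem stmt_7 : ∀ x y : ℕ, 1 ≤ x → 1 ≤ y →
    (2 ^ x + 4 = 6 ^ y ↔ (x = 1 ∧ y = 1) ∨ (x = 5 ∧ y = 2)) := by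
  intro x y hx hy
  constructor
  · intro h
    rcases Nat.lt_or_ge y 3 with hy3 | hy3
    · interval_cases y
      · have h2 : 2 ^ x = 2 ^ 1 := by omega
        exact Or.inl ⟨Nat.pow_right_injective le_rfl h2, rfl⟩
      · have h2 : 2 ^ x = 2 ^ 5 := by omega
        exact Or.inr ⟨Nat.pow_right_injective le_rfl h2, rfl⟩
    · exfalso
      obtain ⟨k, rfl⟩ := Nat.exists_eq_add_of_le hy3
      have hk : 1 ≤ 6 ^ k := Nat.one_le_pow _ _ (by norm_num)
      rw [pow_add] at h
      rcases Nat.lt_or_ge x 3 with hx3 | hx3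
      · interval_cases x <;> omega
      · obtain ⟨m, rfl⟩ := Nat.exists_eq_add_of_le hx3
        rw [pow_add] at h
        omega
  · rintro (⟨rfl, rfl⟩ | ⟨rfl, rfl⟩) <;> norm_num
end

section
/- The only solutions in positive integers (x, y) of the equation 2^x + 89 = 91^y are (x, y) = (1, 1) and (x, y) = (13, 2). -/
/-!
Subtracting the solution `(13, 2)`, a solution with `x = 13 + a`, `y = 2 + b` satisfies
`2 ^ 13 * (2 ^ a - 1) = 91 ^ 2 * (91 ^ b - 1)`. Hence for every `m` coprime to `2 * 91`,
`m ∣ 2 ^ a - 1` if and only if `m ∣ 91 ^ b - 1`; by `dvd_pow_sub_one_iff` each side is a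
divisibility condition on the exponent, by the order of `2` or `91` modulo `m`.

If `b > 0`, going back and forth between the two sides makes `a` too divisible by `7`:
* `49` and `13` divide `2 ^ a - 1`, so `21 ∣ a` and `12 ∣ a`; `16` divides `91 ^ b - 1`, so `4 ∣ b`;
* modulo `41`, `4 ∣ b` gives `20 ∣ a`;
* modulo `61`, `60 ∣ a` gives `60 ∣ b`; modulo `29`, `28 ∣ a` gives `14 ∣ b`;
* modulo `491`, `70 ∣ b` gives `490 ∣ a`.

Then `147 ∣ a`, so `7 ^ 3 ∣ 2 ^ a - 1`, whereas `91 ^ 2 * (91 ^ b - 1)` is divisible by `7` only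
twice.
-/

/-- If `c` has multiplicative order `k` modulo `m` (the three numerical hypotheses), then
`m ∣ c ^ n - 1` exactly when `k ∣ n`. -/
lemma dvd_pow_sub_one_iff (m c k : ℕ) (hk : 0 < k) (h : c ^ k % m = 1 % m)
    (hmin : ∀ r < k, c ^ r % m = 1 % m → r = 0) (n : ℕ) :
    (m : ℤ) ∣ (c : ℤ) ^ n - 1 ↔ k ∣ n := by
  have hred : c ^ n ≡ c ^ (n % k) [MOD m] := by
    have h1 : (c ^ k) ^ (n / k) ≡ 1 ^ (n / k) [MOD m] := Nat.ModEq.pow _ h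
    have h2 := h1.mul_right (c ^ (n % k))
    rwa [← pow_mul, ← pow_add, Nat.div_add_mod, one_pow, one_mul] at h2
  have hcast : (m : ℤ) ∣ (c : ℤ) ^ n - 1 ↔ 1 ≡ c ^ n [MOD m] := by
    rw [Nat.modEq_iff_dvd]
    push_cast
    rfl
  rw [hcast]
  constructor
  · intro h1
    exact Nat.dvd_of_mod_eq_zero (hmin _ (Nat.mod_lt _ hk) (h1.trans hred).symm)
  · intro h1
    rw [Nat.mod_eq_zero_of_dvd h1, pow_zero] at hred
    exact hred.symm

lemma shifted_eq_false (a b : ℕ) (hb : 0 < b)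
    (E : (8192 : ℤ) * (2 ^ a - 1) = 8281 * (91 ^ b - 1)) : False := by
  have to91 : ∀ m : ℤ, IsCoprime m 8281 → m ∣ 2 ^ a - 1 → m ∣ 91 ^ b - 1 := by
    intro m hm h
    exact hm.dvd_of_dvd_mul_left (E ▸ h.mul_left _)
  have to2 : ∀ m : ℤ, IsCoprime m 8192 → m ∣ 91 ^ b - 1 → m ∣ 2 ^ a - 1 := by
    intro m hm h
    exact hm.dvd_of_dvd_mul_left (E ▸ h.mul_left _)
  have o49 := dvd_pow_sub_one_iff 49 2 21 (by norm_num) (by norm_num) (by decide +kernel) a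
  have o13 := dvd_pow_sub_one_iff 13 2 12 (by norm_num) (by norm_num) (by decide +kernel) a
  have o16 := dvd_pow_sub_one_iff 16 91 4 (by norm_num) (by norm_num) (by decide +kernel) b
  have o41 := dvd_pow_sub_one_iff 41 91 4 (by norm_num) (by norm_num) (by decide +kernel) b
  have o41' := dvd_pow_sub_one_iff 41 2 20 (by norm_num) (by norm_num) (by decide +kernel) a
  have o61 := dvd_pow_sub_one_iff 61 91 60 (by norm_num) (by norm_num) (by decide +kernel) b
  have o61' := dvd_pow_sub_one_iff 61 2 60 (by norm_num) (by norm_num) (by decide +kernel) a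
  have o29 := dvd_pow_sub_one_iff 29 91 14 (by norm_num) (by norm_num) (by decide +kernel) b
  have o29' := dvd_pow_sub_one_iff 29 2 28 (by norm_num) (by norm_num) (by decide +kernel) a
  have o491 := dvd_pow_sub_one_iff 491 91 70 (by norm_num) (by norm_num) (by decide +kernel) b
  have o491' := dvd_pow_sub_one_iff 491 2 490 (by norm_num) (by decide +kernel) (by decide +kernel) a
  have o343 := dvd_pow_sub_one_iff 343 2 147 (by norm_num) (by norm_num) (by decide +kernel) a
  push_cast at o49 o13 o16 o41 o41' o61 o61' o29 o29' o491 o491' o343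
  have a21 : 21 ∣ a := o49.1 (by omega)
  have a12 : 12 ∣ a := o13.1 (by omega)
  have b4 : 4 ∣ b := o16.1 (by omega)
  have a20 : 20 ∣ a := o41'.1 (to2 _ (by norm_num) (o41.2 b4))
  have b60 : 60 ∣ b := o61.1 (to91 _ (by norm_num) (o61'.2 (by omega)))
  have b14 : 14 ∣ b := o29.1 (to91 _ (by norm_num) (o29'.2 (by omega)))
  have a490 : 490 ∣ a := o491'.1 (to2 _ (by norm_num) (o491.2 (by omega)))
  have h343 : (343 : ℤ) ∣ 2 ^ a - 1 := o343.2 (by omega)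
  have h7 : (7 : ℤ) ∣ 91 ^ b := dvd_pow (by norm_num) hb.ne'
  omega

theorem stmt_8 : ∀ x y : ℕ, 1 ≤ x → 1 ≤ y →
    (2 ^ x + 89 = 91 ^ y ↔ (x = 1 ∧ y = 1) ∨ (x = 13 ∧ y = 2)) := by
  intro x y hx hy
  constructor
  · intro h
    obtain rfl | rfl | hy3 : y = 1 ∨ y = 2 ∨ 3 ≤ y := by omega
    · have h1 : 2 ^ x = 2 ^ 1 := by omega
      exact Or.inl ⟨Nat.pow_right_injective le_rfl h1, rfl⟩
    · have h1 : 2 ^ x = 2 ^ 13 := by omega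
      exact Or.inr ⟨Nat.pow_right_injective le_rfl h1, rfl⟩
    · exfalso
      have hx13 : 13 ≤ x := by
        by_contra! hlt
        have h1 : 2 ^ x < 2 ^ 13 := Nat.pow_lt_pow_right (by norm_num) hlt
        have h2 : 91 ^ 3 ≤ 91 ^ y := Nat.pow_le_pow_right (by norm_num) hy3
        omega
      obtain ⟨a, rfl⟩ := Nat.exists_eq_add_of_le hx13
      obtain ⟨b, rfl⟩ := Nat.exists_eq_add_of_le (show 2 ≤ y by omega)
      apply shifted_eq_false a b (by omega)
      have hz : (2 : ℤ) ^ (13 + a) + 89 = 91 ^ (2 + b) := by exact_mod_cast h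
      rw [pow_add, pow_add] at hz
      linarith
  · rintro (⟨rfl, rfl⟩ | ⟨rfl, rfl⟩) <;> norm_num
end

section
/- The only solutions in positive integers (x, y) of the equation 3^x + 5 = 2^y are (x, y) = (1, 3) and (x, y) = (3, 5). -/
/-! If `y ≥ 6`, then `3 ^ x ≡ -5 (mod 64)`. Since `3` has order `16` modulo `64`, this forces
`x ≡ 11 (mod 16)`, so Fermat's little theorem gives `2 ^ y = 3 ^ x + 5 ≡ 3 ^ 11 + 5 ≡ 12 (mod 17)`.
But `12` is not a power of `2` modulo `17`: the powers of `2` are `±1, ±2, ±4, ±8`.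
Hence `y ≤ 5` and `x ≤ 3`, which leaves finitely many cases. -/

/-- Both `64` and `17` are treated at once: `1088 = 64 * 17`, and `3 ^ 16 ≡ 1` modulo each. -/
lemma three_pow_mod (x : ℕ) : 3 ^ x % 1088 = 3 ^ (x % 16) % 1088 := by
  conv_lhs => rw [← Nat.div_add_mod x 16, pow_add, pow_mul, Nat.mul_mod, Nat.pow_mod]
  norm_num

lemma two_pow_mod (y : ℕ) : 2 ^ y % 17 = 2 ^ (y % 8) % 17 := by
  conv_lhs => rw [← Nat.div_add_mod y 8, pow_add, pow_mul, Nat.mul_mod, Nat.pow_mod]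
  norm_num

lemma y_lt_six {x y : ℕ} (h : 3 ^ x + 5 = 2 ^ y) : y < 6 := by
  by_contra! hy
  have hdvd : 2 ^ y % 64 = 0 := Nat.mod_eq_zero_of_dvd (pow_dvd_pow 2 hy)
  have h3 := three_pow_mod x
  have h2 := two_pow_mod y
  rw [← h] at hdvd h2
  have hx : x % 16 = 11 := by
    have hr : x % 16 < 16 := Nat.mod_lt _ (by norm_num)
    generalize x % 16 = r at *
    interval_cases r <;> norm_num at h3 <;> omega
  rw [hx] at h3
  have hs : y % 8 < 8 := Nat.mod_lt _ (by norm_num)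
  generalize y % 8 = s at *
  interval_cases s <;> norm_num at h2 h3 <;> omega

theorem stmt_9 : ∀ x y : ℕ, 1 ≤ x → 1 ≤ y →
    (3 ^ x + 5 = 2 ^ y ↔ (x = 1 ∧ y = 3) ∨ (x = 3 ∧ y = 5)) := by
  intro x y hx hy
  constructor
  · intro h
    have hy6 := y_lt_six h
    have hx4 : x < 4 := by
      by_contra! hx4
      have h1 : 3 ^ 4 ≤ 3 ^ x := Nat.pow_le_pow_right (by norm_num) hx4
      have h2 : 2 ^ y ≤ 2 ^ 5 := Nat.pow_le_pow_right (by norm_num) (by omega)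
      omega
    interval_cases x <;> interval_cases y <;> simp_all
  · rintro (⟨rfl, rfl⟩ | ⟨rfl, rfl⟩) <;> norm_num
end

section
/- The only solutions in positive integers (x, y) of the equation 3^x + 10 = 13^y are (x, y) = (1, 1) and (x, y) = (7, 3). -/
/-!
For `x > 7` write `x = 7 + a`, `y = 3 + b` with `a ≥ 1`; subtracting `3 ^ 7 + 10 = 13 ^ 3` gives
`3 ^ 7 * (3 ^ a - 1) = 13 ^ 3 * (13 ^ b - 1)`. Modulo any `n` coprime to `3 * 13`, therefore,
`3 ^ a ≡ 1` if and only if `13 ^ b ≡ 1`. A chain of multiplicative orders now forces too high a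
power of `3` into `b`:

* modulo `3 ^ 7` the order of `13` is `3 ^ 6`, so `3 ^ 6 ∣ b`;
* modulo the prime `1459` the order of `13` is `3 ^ 6` and that of `3 ^ 2` is `3 ^ 6`,
  so `3 ^ 6 ∣ a`;
* modulo the prime `17497` the order of `3` is `3 ^ 6` and that of `13 ^ 4` is `3 ^ 7`,
  so `3 ^ 7 ∣ b`;
* modulo `3 ^ 8` the order of `13` is `3 ^ 7`, so `3 ^ 8 ∣ 13 ^ b - 1`, hence `3 ∣ 3 ^ a - 1`,
  contradicting `a ≥ 1`.

The remaining cases `x ≤ 7` are finite.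
-/

/-- If `c` has order exactly `3 ^ (k + 1)` modulo `n`, as witnessed by two power computations, then
`c ^ e ≡ 1` forces `3 ^ (k + 1) ∣ e`. -/
lemma three_pow_dvd_of_pow_modEq_one {n c k e : ℕ} (h1 : ¬ c ^ (3 ^ k) ≡ 1 [MOD n])
    (h2 : c ^ (3 ^ (k + 1)) ≡ 1 [MOD n]) (h : c ^ e ≡ 1 [MOD n]) : 3 ^ (k + 1) ∣ e := by
  have : Fact (Nat.Prime 3) := ⟨Nat.prime_three⟩
  rw [← ZMod.natCast_eq_natCast_iff] at h1 h2 h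
  push_cast at h1 h2 h
  rw [← orderOf_eq_prime_pow h1 h2]
  exact orderOf_dvd_of_pow_eq_one h

lemma pow_modEq_one_of_dvd {n c d e : ℕ} (h : c ^ d ≡ 1 [MOD n]) (hd : d ∣ e) :
    c ^ e ≡ 1 [MOD n] := by
  obtain ⟨m, rfl⟩ := hd
  simpa [pow_mul] using h.pow m

-- The largest exponent evaluated is `3 ^ 7 = 2187`.
set_option exponentiation.threshold 3000 in
lemma no_large_solution (a b : ℕ) (ha : 1 ≤ a) : 3 ^ 7 * 3 ^ a + 10 ≠ 13 ^ 3 * 13 ^ b := by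
  intro h
  have hb6 : 3 ^ (5 + 1) ∣ b := by
    refine three_pow_dvd_of_pow_modEq_one (n := 2187) (c := 13) ?_ ?_ ?_
    · norm_num [Nat.ModEq]
    · norm_num [Nat.ModEq]
    · have h' : 13 ^ 3 * 13 ^ b ≡ 13 ^ 3 * 1 [MOD 2187] := by
        rw [← h]
        unfold Nat.ModEq
        omega
      exact Nat.ModEq.cancel_left_of_coprime (by norm_num) h'
  have ha6 : 3 ^ (5 + 1) ∣ a := by
    have h13 : 13 ^ b ≡ 1 [MOD 1459] :=
      pow_modEq_one_of_dvd (by norm_num [Nat.ModEq]) hb6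
    have h3 : 3 ^ a ≡ 1 [MOD 1459] := by
      have h' : 3 ^ 7 * 3 ^ a ≡ 3 ^ 7 * 1 [MOD 1459] := by
        refine Nat.ModEq.add_right_cancel' 10 ?_
        rw [h]
        exact h13.mul_left _
      exact Nat.ModEq.cancel_left_of_coprime (by norm_num) h'
    refine three_pow_dvd_of_pow_modEq_one (n := 1459) (c := 3 ^ 2) ?_ ?_ ?_
    · norm_num [Nat.ModEq]
    · norm_num [Nat.ModEq]
    · rw [← pow_mul, mul_comm, pow_mul]
      simpa using h3.pow 2
  have hb7 : 3 ^ (6 + 1) ∣ b := by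
    have h3 : 3 ^ a ≡ 1 [MOD 17497] :=
      pow_modEq_one_of_dvd (by norm_num [Nat.ModEq]) ha6
    have h13 : 13 ^ b ≡ 1 [MOD 17497] := by
      have h' : 13 ^ 3 * 13 ^ b ≡ 13 ^ 3 * 1 [MOD 17497] := by
        rw [← h]
        exact (h3.mul_left (3 ^ 7)).add_right 10
      exact Nat.ModEq.cancel_left_of_coprime (by norm_num) h'
    refine three_pow_dvd_of_pow_modEq_one (n := 17497) (c := 13 ^ 4) ?_ ?_ ?_
    · norm_num [Nat.ModEq]
    · norm_num [Nat.ModEq]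
    · rw [← pow_mul, mul_comm, pow_mul]
      simpa using h13.pow 4
  have h13 : 13 ^ b ≡ 1 [MOD 6561] :=
    pow_modEq_one_of_dvd (by norm_num [Nat.ModEq]) hb7
  obtain ⟨a, rfl⟩ := Nat.exists_eq_add_of_le' ha
  rw [pow_succ] at h
  unfold Nat.ModEq at h13
  omega

theorem stmt_10 : ∀ x y : ℕ, 1 ≤ x → 1 ≤ y →
    (3 ^ x + 10 = 13 ^ y ↔ (x = 1 ∧ y = 1) ∨ (x = 7 ∧ y = 3)) := by
  intro x y hx hy
  constructor
  · intro h
    rcases Nat.lt_or_ge 7 x with hx7 | hx7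
    · exfalso
      have hy3 : 3 ≤ y := by
        by_contra! hlt
        have h1 : 3 ^ 7 < 3 ^ x := Nat.pow_lt_pow_right (by norm_num) hx7
        have h3 : 13 ^ y ≤ 13 ^ 2 := Nat.pow_le_pow_right (by norm_num) (by omega)
        omega
      obtain ⟨a, rfl⟩ := Nat.exists_eq_add_of_le hx7.le
      obtain ⟨b, rfl⟩ := Nat.exists_eq_add_of_le hy3
      rw [pow_add, pow_add] at h
      exact no_large_solution a b (by omega) h
    · have hy3 : y ≤ 3 := by
        by_contra! hlt
        have h1 : 3 ^ x ≤ 3 ^ 7 := Nat.pow_le_pow_right (by norm_num) hx7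
        have h2 : 13 ^ 4 ≤ 13 ^ y := Nat.pow_le_pow_right (by norm_num) hlt
        omega
      interval_cases x <;> interval_cases y <;> simp_all
  · rintro (⟨rfl, rfl⟩ | ⟨rfl, rfl⟩) <;> norm_num
end

section
/- The only solutions in positive integers (x, y) of the equation 3^x + 13 = 2^y are (x, y) = (1, 4) and (x, y) = (5, 8). -/
/-!
Subtracting the solution `3 ^ 5 + 13 = 2 ^ 8` from a putative one with `x = 5 + a`, `y = 8 + b`,
`b ≥ 1`, gives `3 ^ 5 * (3 ^ a - 1) = 2 ^ 8 * (2 ^ b - 1)`. Multiplicative orders now force `a` to be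
too divisible by `2`:
* `2 ^ 8 ∣ 3 ^ a - 1` gives `64 ∣ a`, so `193 ∣ 3 ^ 16 - 1 ∣ 3 ^ a - 1` and hence `193 ∣ 2 ^ b - 1`;
* `2` has order `96` modulo `193`, so `32 ∣ b`, so `257 ∣ 2 ^ 16 - 1 ∣ 2 ^ b - 1` and hence
  `257 ∣ 3 ^ a - 1`;
* `3` is a primitive root modulo `257`, so `256 ∣ a` and `2 ^ 9 ∣ 3 ^ a - 1`.
The last divisibility makes `2 ^ b - 1` even, which is impossible.
-/

/-- If `c` has order exactly `2 ^ (j + 1)` modulo `n`, then every `k` with `c ^ k ≡ 1` is a multiple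
of `2 ^ (j + 1)`. -/
lemma two_pow_dvd_of_pow_mod_eq_one {n c k j : ℕ} (hn : 1 < n) (h1 : c ^ 2 ^ j % n ≠ 1)
    (h2 : c ^ 2 ^ (j + 1) % n = 1) (h : c ^ k % n = 1) : 2 ^ (j + 1) ∣ k := by
  have key : ∀ m : ℕ, (c : ZMod n) ^ m = 1 ↔ c ^ m % n = 1 := by
    intro m
    have := ZMod.natCast_eq_natCast_iff' (c ^ m) 1 n
    rw [Nat.mod_eq_of_lt hn] at this
    simpa using this
  have : Fact (Nat.Prime 2) := ⟨Nat.prime_two⟩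
  rw [← orderOf_eq_prime_pow (x := (c : ZMod n)) (by rwa [key]) (by rwa [key])]
  exact orderOf_dvd_of_pow_eq_one (by rwa [key])

lemma pow_mod_eq_one_of_dvd {n c k d : ℕ} (hn : 1 < n) (h : c ^ d % n = 1) (hd : d ∣ k) :
    c ^ k % n = 1 := by
  obtain ⟨e, rfl⟩ := hd
  rw [pow_mul, Nat.pow_mod, h, one_pow, Nat.mod_eq_of_lt hn]

lemma no_solution_above (a b : ℕ) (hb : 1 ≤ b) (h : 243 * 3 ^ a + 13 = 256 * 2 ^ b) : False := by
  have a256 : 3 ^ a % 256 = 1 := by omega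
  have ha : 2 ^ (5 + 1) ∣ a :=
    two_pow_dvd_of_pow_mod_eq_one (by norm_num) (by norm_num) (by norm_num) a256
  have a193 : 3 ^ a % 193 = 1 :=
    pow_mod_eq_one_of_dvd (d := 16) (by norm_num) (by norm_num) (Dvd.dvd.trans (by norm_num) ha)
  have b193 : 2 ^ b % 193 = 1 := by
    refine Nat.ModEq.cancel_left_of_coprime (m := 193) (c := 256) (b := 1) (by norm_num) ?_
    rw [← h, Nat.ModEq, Nat.add_mod, Nat.mul_mod, a193]
  -- The order `96` of `2` is not a power of two, so its cube, of order `32`, is used instead.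
  have b193' : 8 ^ b % 193 = 1 := by
    rw [show 8 = 2 ^ 3 by norm_num, ← pow_mul, mul_comm, pow_mul, Nat.pow_mod, b193]
  have hb' : 2 ^ (4 + 1) ∣ b :=
    two_pow_dvd_of_pow_mod_eq_one (by norm_num) (by norm_num) (by norm_num) b193'
  have b257 : 2 ^ b % 257 = 1 :=
    pow_mod_eq_one_of_dvd (d := 16) (by norm_num) (by norm_num) (Dvd.dvd.trans (by norm_num) hb')
  have a257 : 3 ^ a % 257 = 1 := by
    refine Nat.ModEq.cancel_left_of_coprime (m := 257) (c := 243) (b := 1) (by norm_num) ?_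
    refine Nat.ModEq.add_right_cancel' 13 ?_
    rw [h, Nat.ModEq, Nat.mul_mod, b257]
  have ha' : 2 ^ (7 + 1) ∣ a :=
    two_pow_dvd_of_pow_mod_eq_one (by norm_num) (by norm_num) (by norm_num) a257
  have a512 : 3 ^ a % 512 = 1 :=
    pow_mod_eq_one_of_dvd (d := 2 ^ (7 + 1)) (by norm_num) (by norm_num) ha'
  obtain ⟨c, rfl⟩ := Nat.exists_eq_add_of_le hb
  rw [pow_add] at h
  clear ha ha' hb' a256 a193 b193 b193' b257 a257
  omega

theorem stmt_11 : ∀ x y : ℕ, 1 ≤ x → 1 ≤ y →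
    (3 ^ x + 13 = 2 ^ y ↔ (x = 1 ∧ y = 4) ∨ (x = 5 ∧ y = 8)) := by
  intro x y hx hy
  constructor
  · intro h
    rcases Nat.lt_or_ge x 6 with hx6 | hx6
    · have hy9 : y < 9 := by
        have h5 : 3 ^ x ≤ 3 ^ 5 := Nat.pow_le_pow_right (by norm_num) (by omega)
        exact (Nat.pow_lt_pow_iff_right (a := 2) (by norm_num)).1 (by omega)
      interval_cases x <;> interval_cases y <;> simp_all
    · have hy9 : 8 < y := by
        have h6 : 3 ^ 6 ≤ 3 ^ x := Nat.pow_le_pow_right (by norm_num) hx6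
        exact (Nat.pow_lt_pow_iff_right (a := 2) (by norm_num)).1 (by omega)
      obtain ⟨a, rfl⟩ := Nat.exists_eq_add_of_le (show 5 ≤ x by omega)
      obtain ⟨b, rfl⟩ := Nat.exists_eq_add_of_le hy9.le
      rw [pow_add, pow_add] at h
      exact (no_solution_above a b (by omega) (by omega)).elim
  · rintro (⟨rfl, rfl⟩ | ⟨rfl, rfl⟩) <;> norm_num
end

section
/- The only solutions in positive integers (x, y) of the equation 3^x + 13 = 16^y are (x, y) = (1, 1) and (x, y) = (5, 2). -/
/-!
For `y ≥ 3`, write `x = a + 5`, `y = b + 2`. Since `3 ^ 5 + 13 = 16 ^ 2`, the equation becomes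
`243 * (3 ^ a - 1) = 256 * (16 ^ b - 1)`. So modulo any number coprime to `2` and `3`, `3 ^ a = 1`
if and only if `16 ^ b = 1`; this transfers divisibility information between `a` and `b`, through
the orders of `3` and `16`:

* modulo `9`, `3 ∣ b`, and modulo `64`, `16 ∣ a`;
* modulo `7`, `3 ∣ b` gives `6 ∣ a`, hence `48 ∣ a`;
* modulo `97`, `48 ∣ a` gives `12 ∣ b`;
* modulo `257`, `4 ∣ b` gives `256 ∣ a`.

Then `512 ∣ 3 ^ a - 1`, so `16 ^ b` is odd, contradicting `b ≥ 1`.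
-/

/-- If `c ^ k ≡ 1` modulo `m`, and no smaller positive exponent has this property, then `k` divides
every exponent `n` with `c ^ n ≡ 1`. The minimality hypothesis is in a decidable form. -/
lemma dvd_of_pow_mod_eq_one {c m k n : ℕ} (hk : 0 < k) (h1 : c ^ k % m = 1 % m)
    (hmin : ∀ r < k, c ^ r % m = 1 → r = 0) (hn : c ^ n % m = 1) : k ∣ n := by
  apply Nat.dvd_of_mod_eq_zero
  apply hmin _ (Nat.mod_lt _ hk)
  rw [← hn]
  have h : c ^ (k * (n / k)) ≡ 1 [MOD m] := by
    have h' : c ^ k ≡ 1 [MOD m] := h1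
    simpa [pow_mul] using h'.pow (n / k)
  have h2 : c ^ (k * (n / k) + n % k) ≡ c ^ (n % k) [MOD m] := by
    simpa [pow_add] using h.mul_right (c ^ (n % k))
  rw [Nat.div_add_mod] at h2
  exact h2.symm

lemma pow_mod_eq_one_of_dvd_s13 {c m k n : ℕ} (h1 : c ^ k % m = 1 % m) (h : k ∣ n) :
    c ^ n ≡ 1 [MOD m] := by
  obtain ⟨j, rfl⟩ := h
  have h' : c ^ k ≡ 1 [MOD m] := h1
  simpa [pow_mul] using h'.pow j

lemma three_of_sixteen {u v m : ℕ} (h : 243 * u + 13 = 256 * v) (hm : m.gcd 243 = 1)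
    (hv : v ≡ 1 [MOD m]) : u ≡ 1 [MOD m] := by
  have h13 : 243 * u + 13 ≡ 243 * 1 + 13 [MOD m] := by
    rw [h]
    exact hv.mul_left 256
  exact Nat.ModEq.cancel_left_of_coprime hm (Nat.ModEq.add_right_cancel' 13 h13)

lemma sixteen_of_three {u v m : ℕ} (h : 243 * u + 13 = 256 * v) (hm : m.gcd 256 = 1)
    (hu : u ≡ 1 [MOD m]) : v ≡ 1 [MOD m] := by
  have h256 : 256 * v ≡ 256 * 1 [MOD m] := by
    rw [← h]
    exact (hu.mul_left 243).add_right 13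
  exact Nat.ModEq.cancel_left_of_coprime hm h256

lemma no_further_solution (a b : ℕ) (hb : 1 ≤ b) : 243 * 3 ^ a + 13 ≠ 256 * 16 ^ b := by
  intro h
  have hv : 16 ∣ 16 ^ b := dvd_pow_self 16 (by omega)
  have t9 : 16 ^ b % 9 = 1 := by clear hv; omega
  have t64 : 3 ^ a % 64 = 1 := by clear hv; omega
  have t512 : 3 ^ a % 512 ≠ 1 := by omega
  have hb3 : 3 ∣ b :=
    dvd_of_pow_mod_eq_one (by norm_num) (by decide +kernel) (by decide +kernel) t9
  have ha16 : 16 ∣ a :=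
    dvd_of_pow_mod_eq_one (by norm_num) (by decide +kernel) (by decide +kernel) t64
  have ha6 : 6 ∣ a :=
    dvd_of_pow_mod_eq_one (m := 7) (by norm_num) (by decide +kernel) (by decide +kernel)
      (three_of_sixteen h (by norm_num) (pow_mod_eq_one_of_dvd_s13 (by decide +kernel) hb3))
  have ha48 : 48 ∣ a := Nat.lcm_dvd ha16 ha6
  have hb12 : 12 ∣ b :=
    dvd_of_pow_mod_eq_one (m := 97) (by norm_num) (by decide +kernel) (by decide +kernel)
      (sixteen_of_three h (by norm_num) (pow_mod_eq_one_of_dvd_s13 (by decide +kernel) ha48))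
  have hb4 : 4 ∣ b := Dvd.dvd.trans (by norm_num) hb12
  have ha256 : 256 ∣ a :=
    dvd_of_pow_mod_eq_one (m := 257) (by norm_num) (by decide +kernel) (by decide +kernel)
      (three_of_sixteen h (by norm_num) (pow_mod_eq_one_of_dvd_s13 (by decide +kernel) hb4))
  exact t512 (pow_mod_eq_one_of_dvd_s13 (by decide +kernel) ha256)

theorem stmt_13 : ∀ x y : ℕ, 1 ≤ x → 1 ≤ y →
    (3 ^ x + 13 = 16 ^ y ↔ (x = 1 ∧ y = 1) ∨ (x = 5 ∧ y = 2)) := by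
  intro x y _ hy
  constructor
  · intro h
    obtain rfl | rfl | hy3 : y = 1 ∨ y = 2 ∨ 3 ≤ y := by omega
    · left
      have h3 : 3 ^ x = 3 ^ 1 := by omega
      exact ⟨Nat.pow_right_injective (by norm_num) h3, rfl⟩
    · right
      have h3 : 3 ^ x = 3 ^ 5 := by omega
      exact ⟨Nat.pow_right_injective (by norm_num) h3, rfl⟩
    · exfalso
      have hle : 16 ^ 3 ≤ 16 ^ y := Nat.pow_le_pow_right (by norm_num) hy3
      have hx : 5 ≤ x := by
        by_contra hlt
        have : 3 ^ x ≤ 3 ^ 5 := Nat.pow_le_pow_right (by norm_num) (by omega)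
        omega
      obtain ⟨a, rfl⟩ := Nat.exists_eq_add_of_le hx
      obtain ⟨b, rfl⟩ := Nat.exists_eq_add_of_le (show 2 ≤ y by omega)
      apply no_further_solution a b (by omega)
      rw [pow_add, pow_add] at h
      omega
  · rintro (⟨rfl, rfl⟩ | ⟨rfl, rfl⟩) <;> norm_num
end

section
/- The only solutions in positive integers (x, y) of the equation 6^x + 9 = 15^y are (x, y) = (1, 1) and (x, y) = (3, 2). -/
theorem stmt_14 : ∀ x y : ℕ, 1 ≤ x → 1 ≤ y →
    (6 ^ x + 9 = 15 ^ y ↔ (x = 1 ∧ y = 1) ∨ (x = 3 ∧ y = 2)) := by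
  intro x y hx hy
  constructor
  · intro h
    rcases Nat.lt_or_ge y 3 with hy3 | hy3
    · interval_cases y
      · left
        exact ⟨Nat.pow_right_injective (by norm_num : 2 ≤ 6)
          (show 6 ^ x = 6 ^ 1 by omega), rfl⟩
      · right
        exact ⟨Nat.pow_right_injective (by norm_num : 2 ≤ 6)
          (show 6 ^ x = 6 ^ 3 by omega), rfl⟩
    · exfalso
      -- Here 27 divides 15 ^ y; if also 3 ≤ x then 27 would divide 9.
      have h15 : 15 ^ 3 ∣ 15 ^ y := pow_dvd_pow 15 hy3
      rcases Nat.lt_or_ge x 3 with hx3 | hx3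
      · interval_cases x <;> omega
      · have h6 : 6 ^ 3 ∣ 6 ^ x := pow_dvd_pow 6 hx3
        omega
  · rintro (⟨rfl, rfl⟩ | ⟨rfl, rfl⟩) <;> norm_num
end

section
/- The only solution in positive integers (x, y) of the equation 7^x + 3 = 10^y is (x, y) = (1, 1). -/
theorem stmt_17 : ∀ x y : ℕ, 1 ≤ x → 1 ≤ y →
    (7 ^ x + 3 = 10 ^ y ↔ x = 1 ∧ y = 1) := by
  intro x y _ hy
  constructor
  · intro h
    -- Powers of 7 modulo 100 cycle through 1, 7, 49, 43, so they never equal 97,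
    -- which `y ≥ 2` would force.
    have h7 : ∀ n : ℕ, 7 ^ n % 100 = 1 ∨ 7 ^ n % 100 = 7 ∨ 7 ^ n % 100 = 49 ∨
        7 ^ n % 100 = 43 := by
      intro n
      induction n with
      | zero => simp
      | succ k ih => rw [pow_succ]; omega
    have hy1 : y = 1 := by
      by_contra hne
      obtain ⟨k, rfl⟩ : ∃ k, y = k + 2 := ⟨y - 2, by omega⟩
      rw [pow_add] at h
      have := h7 x
      omega
    subst hy1
    refine ⟨Nat.pow_right_injective (by norm_num : 2 ≤ 7) ?_, rfl⟩
    show 7 ^ x = 7 ^ 1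
    omega
  · rintro ⟨rfl, rfl⟩
    norm_num
end

section
/- The only solution in positive integers (x, y) of the equation 3^x + 7 = 2^y is (x, y) = (2, 4). -/
/-! Since `3 ^ x + 7 > 8`, the exponent `y` is at least `3`, so reduction mod `8` forces `x` to be
even; reduction mod `3` forces `y` to be even. With `x = 2a` and `y = 2b` the equation becomes
`(2 ^ b - 3 ^ a) * (2 ^ b + 3 ^ a) = 7`, so `2 ^ b = 4` and `3 ^ a = 3`. -/

theorem stmt_18 : ∀ x y : ℕ, 1 ≤ x → 1 ≤ y →
    (3 ^ x + 7 = 2 ^ y ↔ x = 2 ∧ y = 4) := by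
  intro x y hx hy
  constructor
  swap
  · rintro ⟨rfl, rfl⟩
    norm_num
  intro h
  have hy3 : 3 ≤ y := by
    by_contra hlt
    have h1 : 0 < 3 ^ x := by positivity
    interval_cases y <;> omega
  have hxe : Even x := by
    rw [← Nat.not_odd_iff_even]
    rintro ⟨a, rfl⟩
    obtain ⟨c, rfl⟩ := Nat.exists_eq_add_of_le hy3
    have h9 : 9 ^ a % 8 = 1 := by simp [Nat.pow_mod]
    rw [pow_succ, pow_mul, pow_add] at h
    norm_num at h
    omega
  have hye : Even y := by
    rw [← Nat.not_odd_iff_even]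
    rintro ⟨b, rfl⟩
    obtain ⟨c, rfl⟩ := Nat.exists_eq_add_of_le hx
    have h4 : 4 ^ b % 3 = 1 := by simp [Nat.pow_mod]
    rw [pow_succ, pow_mul, pow_add] at h
    norm_num at h
    omega
  obtain ⟨a, rfl⟩ := hxe
  obtain ⟨b, rfl⟩ := hye
  rw [pow_add, pow_add] at h
  have hlt : 3 ^ a < 2 ^ b := by
    by_contra hle
    have := Nat.mul_le_mul (not_lt.mp hle) (not_lt.mp hle)
    omega
  have hpos : 0 < 3 ^ a := by positivity
  -- The gap between `(3 ^ a) ^ 2` and the next square already exceeds `7` once `3 ^ a > 3`.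
  have h3 : 3 ^ a ≤ 3 := by nlinarith
  have h4 : 2 ^ b ≤ 4 := by nlinarith
  have ha : a ≤ 1 := (Nat.pow_le_pow_iff_right (by norm_num : 1 < 3)).mp (by simpa using h3)
  have hb : b ≤ 2 := (Nat.pow_le_pow_iff_right (by norm_num : 1 < 2)).mp (by simpa using h4)
  interval_cases a <;> interval_cases b <;> simp_all
end

section
/- The only solution in positive integers (x, y) of the equation 17^x + 3 = 20^y is (x, y) = (1, 1). -/
theorem stmt_19 : ∀ x y : ℕ, 1 ≤ x → 1 ≤ y →
    (17 ^ x + 3 = 20 ^ y ↔ x = 1 ∧ y = 1) := by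
  intro x y hx hy
  constructor
  · intro h
    -- Modulo 16 the left side is 4, while 16 divides 20 ^ y as soon as y ≥ 2.
    have h17 : 17 ^ x % 16 = 1 := by simp [Nat.pow_mod]
    have hy1 : y = 1 := by
      by_contra hne
      obtain ⟨k, rfl⟩ : ∃ k, y = k + 2 := ⟨y - 2, by omega⟩
      rw [pow_add] at h
      omega
    subst hy1
    refine ⟨Nat.pow_right_injective (by norm_num : 2 ≤ 17) ?_, rfl⟩
    change 17 ^ x = 17 ^ 1
    omega
  · rintro ⟨rfl, rfl⟩
    norm_num
end
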